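/- Let G be a finite group, k a field, and M an endofinite kG-module such that the subadditive function χ_M is tensor closed. Then for every finite dimensional kG-module X, one has X ∈ Adloc(χ_M) if and only if Ext^n_{kG}(X, M) = 0 for all n ≥ 1. -/

import Mathlib

/-- The composition length of a module (the length of a composition series,
zero if none exists). -/
noncomputable def compLength (R : Type) [Ring R] (M : Type) [AddCommGroup M] [Module R M] : ℕ := by
  classical
  exact if h : ∃ s : CompositionSeries (Submodule R M), s.head = ⊥ ∧ s.last = ⊤ then
    h.choose.length else 0

/-- A module `M` is endofinite if it has finite composition length over its
endomorphism ring, which acts on `M` by application. -/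
def IsEndofinite (A : Type) [Ring A] (M : Type) [AddCommGroup M] [Module A M] : Prop :=
  IsFiniteLength (Module.End A M) M

/-- The subadditive function `χ_M` associated to a module `M`:
`χ_M(X) = ℓ_{End_A(M)} Hom_A(X, M)`, where `End_A(M)` acts by postcomposition. -/
noncomputable def chiMod (A : Type) [Ring A] (M : Type) [AddCommGroup M] [Module A M]
    (X : Type) [AddCommGroup X] [Module A X] : ℕ :=
  compLength (Module.End A M) (X →ₗ[A] M)

/-- A subadditive function on the finite dimensional (i.e. finitely generated)
modules over a finite dimensional algebra `A`: it depends only on the isomorphism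
class, is additive on direct sums, and satisfies `χ(X) + χ(Z) ≥ χ(Y)` for every
exact sequence `X → Y → Z → 0`. -/
def IsSubadditive (A : Type) [Ring A]
    (χ : (X : Type) → [AddCommGroup X] → [Module A X] → ℕ) : Prop :=
  (∀ (X Y : Type) [AddCommGroup X] [Module A X] [AddCommGroup Y] [Module A Y],
      Module.Finite A X → Module.Finite A Y →
      (X ≃ₗ[A] Y) → χ X = χ Y) ∧
  (∀ (X Y : Type) [AddCommGroup X] [Module A X] [AddCommGroup Y] [Module A Y],
      Module.Finite A X → Module.Finite A Y →
      χ (X × Y) = χ X + χ Y) ∧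
  (∀ (X Y Z : Type) [AddCommGroup X] [Module A X] [AddCommGroup Y] [Module A Y]
      [AddCommGroup Z] [Module A Z],
      Module.Finite A X → Module.Finite A Y → Module.Finite A Z →
      ∀ (f : X →ₗ[A] Y) (g : Y →ₗ[A] Z),
      Function.Exact f g → Function.Surjective g → χ Y ≤ χ X + χ Z)

/-- Membership in the additive locus `Adloc(χ)`: `Z` is finite dimensional and
`χ(X) - χ(Y) + χ(Z) = 0` for every short exact sequence `0 → X → Y → Z → 0` of
finite dimensional modules. -/
def MemAdloc (A : Type) [Ring A]
    (χ : (X : Type) → [AddCommGroup X] → [Module A X] → ℕ)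
    (Z : Type) [AddCommGroup Z] [Module A Z] : Prop :=
  Module.Finite A Z ∧
  ∀ (X Y : Type) [AddCommGroup X] [Module A X] [AddCommGroup Y] [Module A Y],
    Module.Finite A X → Module.Finite A Y →
    ∀ (f : X →ₗ[A] Y) (g : Y →ₗ[A] Z),
    Function.Injective f → Function.Exact f g → Function.Surjective g →
    χ X + χ Z = χ Y

/-- The tensor product over `k` of two `kG`-modules, with the diagonal `G`-action. -/
noncomputable abbrev dtensor (k G : Type) [Field k] [Group G] (M N : Type)
    [AddCommGroup M] [Module (MonoidAlgebra k G) M]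
    [AddCommGroup N] [Module (MonoidAlgebra k G) N] : Type :=
  ((Representation.ofModule (k := k) (G := G) M).tprod (Representation.ofModule N)).asModule

/-- The additive group structure of the tensor product (no longer found by instance search). -/
noncomputable instance dtensorAddCommGroup (k G : Type) [Field k] [Group G] (M N : Type)
    [AddCommGroup M] [Module (MonoidAlgebra k G) M]
    [AddCommGroup N] [Module (MonoidAlgebra k G) N] :
    AddCommGroup (dtensor k G M N) :=
  @TensorProduct.addCommGroup k _ (RestrictScalars k (MonoidAlgebra k G) M)
    (RestrictScalars k (MonoidAlgebra k G) N)
    (instAddCommGroupRestrictScalars k (MonoidAlgebra k G) M) _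
    (RestrictScalars.module k (MonoidAlgebra k G) M) _

/-- Mathlib's `kG`-module structure on `Representation.asModule`, over the additive group
structure above (no longer found by instance search). -/
noncomputable instance dtensorModule (k G : Type) [Field k] [Group G] (M N : Type)
    [AddCommGroup M] [Module (MonoidAlgebra k G) M]
    [AddCommGroup N] [Module (MonoidAlgebra k G) N] :
    @Module (MonoidAlgebra k G) (dtensor k G M N) _
      (dtensorAddCommGroup k G M N).toAddCommMonoid :=
  Representation.instModuleMonoidAlgebraAsModule
    ((Representation.ofModule (k := k) (G := G) M).tprod (Representation.ofModule N))

/-- A function on `kG`-modules is tensor closed if its additive locus is closed under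
tensoring (over `k`, with diagonal `G`-action) with finite dimensional modules. -/
def TensorClosed (k G : Type) [Field k] [Group G]
    (χ : (X : Type) → [AddCommGroup X] → [Module (MonoidAlgebra k G) X] → ℕ) : Prop :=
  ∀ (M N : Type) [AddCommGroup M] [Module (MonoidAlgebra k G) M]
    [AddCommGroup N] [Module (MonoidAlgebra k G) N],
    MemAdloc (MonoidAlgebra k G) χ M → Module.Finite (MonoidAlgebra k G) N →
    MemAdloc (MonoidAlgebra k G) χ (dtensor k G M N)

open CategoryTheory in
theorem ext_iff (A : Type) [Ring A] (X M : ModuleCat.{0} A) (n : ℕ) (hn : 1 ≤ n) :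
   Subsingleton (((Ext ℤ (ModuleCat A) n).obj (Opposite.op X)).obj M) ↔
     Subsingleton (Abelian.Ext.{0} X M n) := by
  obtain ⟨m, rfl⟩ : ∃ m, n = m + 1 := ⟨n - 1, by omega⟩
  let P := projectiveResolution X
  rw [← ModuleCat.isZero_iff_subsingleton, (P.isoExt (R := ℤ) (m+1) M).isZero_iff,
    ← HomologicalComplex.exactAt_iff_isZero_homology,
    HomologicalComplex.exactAt_iff' _ m (m+1) (m+2) (by simp) (by simp),
    ShortComplex.moduleCat_exact_iff]
  constructor
  · intro h
    refine ⟨fun a b => ?_⟩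
    suffices ∀ a : Abelian.Ext.{0} X M (m+1), a = 0 by rw [this a, this b]
    intro a
    obtain ⟨f, hf, rfl⟩ := P.extMk_surjective a (m+2) rfl
    rw [P.extMk_eq_zero_iff f _ _ hf m rfl]
    exact h f hf
  · intro h f hf
    have := Subsingleton.elim (P.extMk f (m+2) rfl hf) 0
    rw [P.extMk_eq_zero_iff f _ _ hf m rfl] at this
    exact this


open CategoryTheory

section ExtPart

variable {A : Type} [Ring A] {W P X M : Type} [AddCommGroup W] [Module A W]
  [AddCommGroup P] [Module A P] [AddCommGroup X] [Module A X] [AddCommGroup M] [Module A M]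

theorem sesOf (f : W →ₗ[A] P) (g : P →ₗ[A] X) (hf : Function.Injective f)
    (hfg : Function.Exact f g) (hg : Function.Surjective g) :
    (ShortComplex.mk (ModuleCat.ofHom f) (ModuleCat.ofHom g)
      (by ext x; exact hfg.apply_apply_eq_zero x)).ShortExact where
  exact := by
    rw [ShortComplex.moduleCat_exact_iff]
    intro y hy
    exact (hfg y).1 hy
  mono_f := (ModuleCat.mono_iff_injective _).2 hf
  epi_g := (ModuleCat.epi_iff_surjective _).2 hg

theorem lift_of_ext1 (h : Subsingleton (Abelian.Ext.{0} (ModuleCat.of A X) (ModuleCat.of A M) 1))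
    (f : W →ₗ[A] P) (g : P →ₗ[A] X) (hf : Function.Injective f)
    (hfg : Function.Exact f g) (hg : Function.Surjective g) (φ : W →ₗ[A] M) :
    ∃ ψ : P →ₗ[A] M, ψ ∘ₗ f = φ := by
  have S := sesOf f g hf hfg hg
  obtain ⟨x, hx⟩ := Abelian.Ext.contravariant_sequence_exact₁ S (ModuleCat.of A M)
    (Abelian.Ext.mk₀ (ModuleCat.ofHom φ)) (n₁ := 1) rfl (Subsingleton.elim (h := h) _ _)
  obtain ⟨ψ, rfl⟩ := Abelian.Ext.homEquiv₀.symm.surjective x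
  refine ⟨ψ.hom, ?_⟩
  rw [Abelian.Ext.homEquiv₀_symm_apply, Abelian.Ext.mk₀_comp_mk₀] at hx
  have := Abelian.Ext.homEquiv₀.symm.injective hx
  have := congrArg ModuleCat.Hom.hom this
  exact this

theorem ext1_of_lift [Module.Projective A P]
    (f : W →ₗ[A] P) (g : P →ₗ[A] X) (hf : Function.Injective f)
    (hfg : Function.Exact f g) (hg : Function.Surjective g)
    (h : ∀ φ : W →ₗ[A] M, ∃ ψ : P →ₗ[A] M, ψ ∘ₗ f = φ) :
    Subsingleton (Abelian.Ext.{0} (ModuleCat.of A X) (ModuleCat.of A M) 1) := by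
  have S := sesOf f g hf hfg hg
  have : Projective (ModuleCat.of A P) := inferInstance
  suffices ∀ a : Abelian.Ext.{0} (ModuleCat.of A X) (ModuleCat.of A M) 1, a = 0 from
    ⟨fun a b => by rw [this a, this b]⟩
  intro a
  obtain ⟨x, rfl⟩ := Abelian.Ext.contravariant_sequence_exact₃ S (ModuleCat.of A M) a
    (Abelian.Ext.eq_zero_of_projective (P := ModuleCat.of A P) _) (n₀ := 0) rfl
  obtain ⟨φ, rfl⟩ := Abelian.Ext.homEquiv₀.symm.surjective x
  obtain ⟨ψ, hψ⟩ := h φ.hom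
  have e : φ = ModuleCat.ofHom f ≫ ModuleCat.ofHom ψ := by
    ext1; exact hψ.symm
  rw [Abelian.Ext.homEquiv₀_symm_apply, e, ← Abelian.Ext.mk₀_comp_mk₀]
  exact S.extClass_comp_assoc _ 

theorem ext_shift (hP : Module.Projective A P)
    (f : W →ₗ[A] P) (g : P →ₗ[A] X) (hf : Function.Injective f)
    (hfg : Function.Exact f g) (hg : Function.Surjective g) (n : ℕ)
    (h : Subsingleton (Abelian.Ext.{0} (ModuleCat.of A W) (ModuleCat.of A M) n)) :
    Subsingleton (Abelian.Ext.{0} (ModuleCat.of A X) (ModuleCat.of A M) (n+1)) := by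
  have S := sesOf f g hf hfg hg
  have : Projective (ModuleCat.of A P) := inferInstance
  suffices ∀ a : Abelian.Ext.{0} (ModuleCat.of A X) (ModuleCat.of A M) (n+1), a = 0 from
    ⟨fun a b => by rw [this a, this b]⟩
  intro a
  obtain ⟨x, rfl⟩ := Abelian.Ext.contravariant_sequence_exact₃ S (ModuleCat.of A M) a
    (Abelian.Ext.eq_zero_of_projective (P := ModuleCat.of A P) _) (n₀ := n) (add_comm _ _)
  rw [Subsingleton.elim (h := h) x 0]
  simp

end ExtPart

section Len

theorem compLength_eq (R : Type) [Ring R] (M : Type) [AddCommGroup M] [Module R M]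
    (h : IsFiniteLength R M) : (compLength R M : ℕ∞) = Module.length R M := by
  have h' := isFiniteLength_iff_exists_compositionSeries.1 h
  unfold compLength
  rw [dif_pos h']
  exact Module.length_compositionSeries _ h'.choose_spec.1 h'.choose_spec.2

variable {A : Type} [Ring A] {W P X M : Type} [AddCommGroup W] [Module A W]
  [AddCommGroup P] [Module A P] [AddCommGroup X] [Module A X] [AddCommGroup M] [Module A M]

theorem finLen (hM : IsEndofinite A M) (hX : Module.Finite A X) :
    IsFiniteLength (Module.End A M) (X →ₗ[A] M) := by
  obtain ⟨n, s, hs⟩ := Module.Finite.exists_fin (R := A) (M := X)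
  have h := isFiniteLength_iff_isNoetherian_isArtinian.1 hM
  have := h.1
  have := h.2
  let e : (X →ₗ[A] M) →ₗ[Module.End A M] (Fin n → M) :=
    { toFun := fun φ i => φ (s i), map_add' := fun _ _ => rfl, map_smul' := fun _ _ => rfl }
  have hp : IsFiniteLength (Module.End A M) (Fin n → M) :=
    isFiniteLength_iff_isNoetherian_isArtinian.2 ⟨inferInstance, inferInstance⟩
  refine hp.of_injective (f := e) ?_
  intro a b hab
  refine LinearMap.ext_on_range hs fun i => congrFun hab i

theorem chi_iff (hM : IsEndofinite A M) (hW : Module.Finite A W) (hP : Module.Finite A P)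
    (hX : Module.Finite A X) (f : W →ₗ[A] P) (g : P →ₗ[A] X) 
    (hfg : Function.Exact f g) (hg : Function.Surjective g) :
    chiMod A M W + chiMod A M X = chiMod A M P ↔
      ∀ φ : W →ₗ[A] M, ∃ ψ : P →ₗ[A] M, ψ ∘ₗ f = φ := by
  let F : (P →ₗ[A] M) →ₗ[Module.End A M] (W →ₗ[A] M) := LinearMap.lcomp _ M f
  let E : (X →ₗ[A] M) →ₗ[Module.End A M] (P →ₗ[A] M) := LinearMap.lcomp _ M g
  have hE : Function.Injective E := by
    intro a b hab
    ext x
    obtain ⟨y, rfl⟩ := hg x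
    exact LinearMap.congr_fun hab y
  have hEF : Function.Exact E F := by
    intro φ
    constructor
    · intro h
      have hk : LinearMap.ker g ≤ LinearMap.ker φ := by
        intro y hy
        obtain ⟨w, rfl⟩ := (hfg y).1 hy
        exact LinearMap.congr_fun h w
      refine ⟨((LinearMap.ker g).liftQ φ hk) ∘ₗ (g.quotKerEquivOfSurjective hg).symm.toLinearMap, ?_⟩
      ext y
      change (LinearMap.ker g).liftQ φ hk ((g.quotKerEquivOfSurjective hg).symm (g y)) = φ y
      have : (g.quotKerEquivOfSurjective hg).symm (g y) = Submodule.Quotient.mk y := by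
        rw [LinearEquiv.symm_apply_eq]; rfl
      rw [this, Submodule.liftQ_apply]
    · rintro ⟨ψ, rfl⟩
      ext w
      change ψ (g (f w)) = 0
      rw [hfg.apply_apply_eq_zero, map_zero]
  have hl := Module.length_eq_add_of_exact (R := Module.End A M) E F.rangeRestrict hE
    F.surjective_rangeRestrict (by
      intro x; rw [← hEF x]; rw [Subtype.ext_iff]; rfl)
  have fW := finLen hM hW
  obtain ⟨i1, i2⟩ := isFiniteLength_iff_isNoetherian_isArtinian.1 fW
  have cW := compLength_eq _ _ fW
  have cX := compLength_eq _ _ (finLen hM hX)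
  have cP := compLength_eq _ _ (finLen hM hP)
  unfold chiMod
  rw [← Nat.cast_inj (R := ℕ∞), Nat.cast_add, cW, cX, cP, hl, add_comm,
    (ENat.addLECancellable_of_ne_top (Module.length_ne_top_iff.2 (finLen hM hX))).inj]
  change _ ↔ Function.Surjective F
  rw [← LinearMap.range_eq_top]
  constructor
  · intro h
    by_contra hne
    exact (Submodule.length_lt hne).ne h.symm
  · intro h
    rw [h, Module.length_top]

theorem adloc_iff [IsNoetherianRing A] (hM : IsEndofinite A M) (hX : Module.Finite A X) :
    MemAdloc A (chiMod A M) X ↔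
      Subsingleton (Abelian.Ext.{0} (ModuleCat.of A X) (ModuleCat.of A M) 1) := by
  constructor
  · rintro ⟨-, h⟩
    obtain ⟨n, g, hg⟩ := Module.Finite.exists_fin' A X
    have hK : Module.Finite A (LinearMap.ker g) := inferInstance
    have hex : Function.Exact (LinearMap.ker g).subtype g := LinearMap.exact_subtype_ker_map g
    refine ext1_of_lift (LinearMap.ker g).subtype g (Submodule.injective_subtype _) hex hg ?_
    rw [← chi_iff hM hK inferInstance hX _ g hex hg]
    exact h _ _ hK inferInstance _ g (Submodule.injective_subtype _) hex hg
  · intro h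
    refine ⟨hX, ?_⟩
    intro W Y _ _ _ _ hW hY f g hf hfg hg
    rw [chi_iff hM hW hY hX f g hfg hg]
    exact lift_of_ext1 h f g hf hfg hg

end Len

section Tens

open TensorProduct

variable {k G : Type} [Field k] [Group G]

/-- promote an additive map compatible with monomials to a linear map -/
def mkLin {V W : Type} [AddCommGroup V] [Module (MonoidAlgebra k G) V] [AddCommGroup W]
    [Module (MonoidAlgebra k G) W] (f : V →+ W)
    (h : ∀ (g : G) (r : k) (v : V), f ((MonoidAlgebra.single g r : MonoidAlgebra k G) • v) =
      (MonoidAlgebra.single g r : MonoidAlgebra k G) • f v) : V →ₗ[MonoidAlgebra k G] W where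
  toFun := f
  map_add' := map_add f
  map_smul' := by
    intro a v
    induction a using MonoidAlgebra.induction_linear with
    | zero => simp
    | add x y hx hy => simp only [add_smul, map_add, hx, hy, RingHom.id_apply] at *
    | single g r => exact h g r v

theorem single_one_smul {V : Type} [AddCommGroup V] [Module k V] [Module (MonoidAlgebra k G) V]
    [IsScalarTower k (MonoidAlgebra k G) V] (r : k) (v : V) :
    (MonoidAlgebra.single 1 r : MonoidAlgebra k G) • v = r • v := by
  have : (MonoidAlgebra.single 1 r : MonoidAlgebra k G) = r • (1 : MonoidAlgebra k G) := by
    rw [MonoidAlgebra.one_def, MonoidAlgebra.smul_single, smul_eq_mul, mul_one]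
  rw [this, smul_assoc, one_smul]

theorem single_eq (g : G) (r : k) : (MonoidAlgebra.single g r : MonoidAlgebra k G) =
    r • (MonoidAlgebra.single g 1 : MonoidAlgebra k G) := by
  rw [MonoidAlgebra.smul_single, smul_eq_mul, mul_one]

section core

variable {X N B T S : Type} [AddCommGroup X] [Module k X] [Module (MonoidAlgebra k G) X]
  [IsScalarTower k (MonoidAlgebra k G) X]
  [AddCommGroup N] [Module k N] [Module (MonoidAlgebra k G) N]
  [IsScalarTower k (MonoidAlgebra k G) N]
  [AddCommGroup B] [Module k B] [Module (MonoidAlgebra k G) B]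
  [IsScalarTower k (MonoidAlgebra k G) B]
  [AddCommGroup T] [Module (MonoidAlgebra k G) T]
  [AddCommGroup S] [Module (MonoidAlgebra k G) S]

/-- the smul of `T` is the diagonal one -/
def Diag (e : T ≃+ X ⊗[k] N) : Prop := ∀ (g : G) (r : k) (x : X) (n : N),
  (MonoidAlgebra.single g r : MonoidAlgebra k G) • e.symm (x ⊗ₜ n) =
    e.symm (((MonoidAlgebra.single g r : MonoidAlgebra k G) • x) ⊗ₜ
      ((MonoidAlgebra.single g 1 : MonoidAlgebra k G) • n))

theorem ind (e : T ≃+ X ⊗[k] N) {C : T → Prop} (z : T) (h0 : C 0)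
    (h1 : ∀ x n, C (e.symm (x ⊗ₜ n))) (h2 : ∀ a b, C a → C b → C (a + b)) : C z := by
  obtain ⟨w, rfl⟩ := e.symm.surjective z
  induction w using TensorProduct.induction_on with
  | zero => simpa using h0
  | tmul x n => exact h1 x n
  | add a b ha hb => rw [map_add]; exact h2 _ _ ha hb

theorem ex_iota (e : T ≃+ X ⊗[k] N) (he : Diag (G := G) e) (e' : S ≃+ X ⊗[k] B)
    (he' : Diag (G := G) e')
    (j : N →ₗ[MonoidAlgebra k G] B) :
    ∃ f : T →ₗ[MonoidAlgebra k G] S, ∀ z, f z =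
      e'.symm (LinearMap.lTensor X (j.restrictScalars k) (e z)) := by
  refine ⟨mkLin ((e'.symm.toAddMonoidHom.comp
    (LinearMap.lTensor X (j.restrictScalars k)).toAddMonoidHom).comp e.toAddMonoidHom) ?_,
    fun z => rfl⟩
  intro g r v
  induction v using ind e with
  | h0 => simp only [smul_zero, map_zero]
  | h2 a b ha hb => rw [smul_add, map_add, ha, hb, map_add, smul_add]
  | h1 x n =>
    rw [he g r x n]
    have := he' g r x (j n)
    simp [this]

theorem ex_pi (e' : S ≃+ X ⊗[k] B)
    (he' : Diag (G := G) e')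
    (ε : B →ₗ[k] k) (hε : ∀ (g : G) (b : B),
      ε ((MonoidAlgebra.single g 1 : MonoidAlgebra k G) • b) = ε b) :
    ∃ f : S →ₗ[MonoidAlgebra k G] X, ∀ z, f z =
      TensorProduct.rid k X (LinearMap.lTensor X ε (e' z)) := by
  refine ⟨mkLin (((TensorProduct.rid k X).toLinearMap.toAddMonoidHom.comp
    (LinearMap.lTensor X ε).toAddMonoidHom).comp e'.toAddMonoidHom) ?_,
    fun z => rfl⟩
  intro g r v
  induction v using ind e' with
  | h0 => simp only [smul_zero, map_zero]
  | h2 a b ha hb => rw [smul_add, map_add, ha, hb, map_add, smul_add]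
  | h1 x n =>
    rw [he' g r x n]
    simp only [AddMonoidHom.coe_comp, Function.comp_apply, AddEquiv.coe_toAddMonoidHom,
      AddEquiv.apply_symm_apply, LinearMap.toAddMonoidHom_coe, LinearMap.lTensor_tmul,
      LinearEquiv.coe_coe, TensorProduct.rid_tmul, hε]
    rw [← single_one_smul (G := G), ← single_one_smul (G := G), smul_smul, smul_smul,
      MonoidAlgebra.single_mul_single, MonoidAlgebra.single_mul_single, one_mul, mul_one, mul_comm]

theorem proj [Finite G] [Module.Finite (MonoidAlgebra k G) X] (e' : S ≃+ X ⊗[k] B)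
    (he' : Diag (G := G) e') (u : MonoidAlgebra k G ≃ₗ[MonoidAlgebra k G] B) :
    Module.Projective (MonoidAlgebra k G) S := by
  have : Module.Finite k X := Module.Finite.trans (MonoidAlgebra k G) _
  have : Module.Finite k B := Module.Finite.equiv (u.restrictScalars k)
  let b := Module.finBasis k X
  let β : (Fin (Module.finrank k X) → MonoidAlgebra k G) →ₗ[MonoidAlgebra k G] S :=
    Fintype.linearCombination (MonoidAlgebra k G) (fun i => e'.symm (b i ⊗ₜ u 1))
  have ek : ∀ (r : k) (s : S), e' ((MonoidAlgebra.single 1 r : MonoidAlgebra k G) • s) =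
      r • e' s := by
    intro r s
    induction s using ind e' with
    | h0 => simp only [smul_zero, map_zero]
    | h2 a b ha hb => rw [smul_add, map_add, ha, hb, map_add, smul_add]
    | h1 x n =>
      rw [he', e'.apply_symm_apply, e'.apply_symm_apply, single_one_smul, single_one_smul,
        one_smul, TensorProduct.smul_tmul']
  let βk : (Fin (Module.finrank k X) → MonoidAlgebra k G) →ₗ[k] X ⊗[k] B :=
    { toFun := fun v => e' (β v)
      map_add' := fun v w => by simp only [map_add]
      map_smul' := fun r v => by
        rw [RingHom.id_apply, ← ek, ← map_smul]
        congr 2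
        exact (single_one_smul (G := G) r v).symm }
  have m1 : ∀ x : X, e'.symm (x ⊗ₜ u 1) ∈ LinearMap.range β := by
    intro x
    have hx : x ∈ Submodule.span k (Set.range b) := by rw [b.span_eq]; trivial
    induction hx using Submodule.span_induction with
    | mem x hx =>
      obtain ⟨i, rfl⟩ := hx
      refine ⟨Pi.single i 1, ?_⟩
      simp [β, Fintype.linearCombination_apply_single]
    | zero => simp
    | add x y _ _ hx hy => rw [TensorProduct.add_tmul, map_add]; exact Submodule.add_mem _ hx hy
    | smul r x _ hx =>
      have h := Submodule.smul_mem _ (MonoidAlgebra.single 1 r : MonoidAlgebra k G) hx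
      rwa [he', single_one_smul, single_one_smul, one_smul] at h
  have hs : Function.Surjective β := by
    rw [← LinearMap.range_eq_top, eq_top_iff]
    rintro z -
    induction z using ind e' with
    | h0 => exact Submodule.zero_mem _
    | h2 a b ha hb => exact Submodule.add_mem _ ha hb
    | h1 x a =>
      obtain ⟨a, rfl⟩ := u.surjective a
      induction a using MonoidAlgebra.induction_linear with
      | zero => simp
      | add u v hu hv =>
        rw [map_add, TensorProduct.tmul_add, map_add]; exact Submodule.add_mem _ hu hv
      | single g r =>
        have h := Submodule.smul_mem _ (MonoidAlgebra.single g r : MonoidAlgebra k G)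
          (m1 ((MonoidAlgebra.single g⁻¹ 1 : MonoidAlgebra k G) • x))
        rw [he', smul_smul, MonoidAlgebra.single_mul_single, ← map_smul, smul_eq_mul, mul_one,
          mul_one, mul_inv_cancel, single_one_smul, TensorProduct.smul_tmul] at h
        have e1 : u (MonoidAlgebra.single g r) =
            r • u (MonoidAlgebra.single g 1 : MonoidAlgebra k G) := by
          rw [← single_one_smul (G := G), ← map_smul, smul_eq_mul,
            MonoidAlgebra.single_mul_single, one_mul, mul_one]
        rw [e1]; exact h
  have hi : Function.Injective βk := by
    have hf : Module.finrank k (Fin (Module.finrank k X) → MonoidAlgebra k G) =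
        Module.finrank k (X ⊗[k] B) := by
      rw [Module.finrank_tensorProduct, Module.finrank_pi_fintype,
        ← (u.restrictScalars k).finrank_eq]
      simp
    exact (LinearMap.injective_iff_surjective_of_finrank_eq_finrank hf (f := βk)).2
      (e'.surjective.comp hs)
  have hi' : Function.Injective β := fun a b h => hi (congrArg e' h)
  exact Module.Projective.of_equiv (LinearEquiv.ofBijective β ⟨hi', hs⟩)

theorem core [Finite G] [Module.Finite (MonoidAlgebra k G) X]
    (e : T ≃+ X ⊗[k] N) (he : Diag (G := G) e) (e' : S ≃+ X ⊗[k] B) (he' : Diag (G := G) e')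
    (j : N →ₗ[MonoidAlgebra k G] B) (hj : Function.Injective j)
    (ε : B →ₗ[k] k) (hε : ∀ (g : G) (b : B),
      ε ((MonoidAlgebra.single g 1 : MonoidAlgebra k G) • b) = ε b)
    (hjε : Function.Exact j ε) (hs : Function.Surjective ε)
    (u : MonoidAlgebra k G ≃ₗ[MonoidAlgebra k G] B) :
    ∃ (f : T →ₗ[MonoidAlgebra k G] S) (g : S →ₗ[MonoidAlgebra k G] X),
      Function.Injective f ∧ Function.Exact f g ∧ Function.Surjective g ∧
      Module.Projective (MonoidAlgebra k G) S := by
  obtain ⟨f, hf⟩ := ex_iota e he e' he' j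
  obtain ⟨p, hp⟩ := ex_pi e' he' ε hε
  refine ⟨f, p, ?_, ?_, ?_, proj e' he' u⟩
  · intro a b hab
    rw [hf, hf] at hab
    exact e.injective (Module.Flat.lTensor_preserves_injective_linearMap (M := X)
      (j.restrictScalars k) hj (e'.symm.injective hab))
  · intro z
    have h := lTensor_exact X (f := j.restrictScalars k) (g := ε) hjε hs
    rw [hp, LinearEquiv.map_eq_zero_iff, h (e' z)]
    constructor
    · rintro ⟨w, hw⟩
      exact ⟨e.symm w, by rw [hf, e.apply_symm_apply, hw, e'.symm_apply_apply]⟩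
    · rintro ⟨w, rfl⟩
      exact ⟨e w, by rw [hf, e'.apply_symm_apply]⟩
  · intro x
    obtain ⟨y, hy⟩ := (TensorProduct.rid k X).surjective x
    obtain ⟨w, rfl⟩ := LinearMap.lTensor_surjective X hs y
    exact ⟨e'.symm w, by rw [hp, e'.apply_symm_apply, hy]⟩

end core

theorem tower {V : Type} [AddCommGroup V] [Module (MonoidAlgebra k G) V] :
    letI : Module k V := Module.compHom V (algebraMap k (MonoidAlgebra k G))
    IsScalarTower k (MonoidAlgebra k G) V := by
  letI : Module k V := Module.compHom V (algebraMap k (MonoidAlgebra k G))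
  refine ⟨fun r a v => ?_⟩
  change _ = algebraMap k (MonoidAlgebra k G) r • (a • v)
  rw [Algebra.smul_def, mul_smul]

theorem dt_equiv {X N : Type} [AddCommGroup X] [Module (MonoidAlgebra k G) X]
    [AddCommGroup N] [Module (MonoidAlgebra k G) N] :
    letI : Module k X := Module.compHom X (algebraMap k (MonoidAlgebra k G))
    letI : Module k N := Module.compHom N (algebraMap k (MonoidAlgebra k G))
    ∃ e : dtensor k G X N ≃+ X ⊗[k] N, Diag (G := G) e := by
  letI : Module k X := Module.compHom X (algebraMap k (MonoidAlgebra k G))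
  letI : Module k N := Module.compHom N (algebraMap k (MonoidAlgebra k G))
  have := tower (k := k) (G := G) (V := X)
  let e : dtensor k G X N ≃+ X ⊗[k] N :=
    { toFun := fun x => x, invFun := fun x => x, left_inv := fun _ => rfl,
      right_inv := fun _ => rfl, map_add' := fun _ _ => rfl }
  refine ⟨e, ?_⟩
  intro g r x n
  have h := Representation.single_smul ((Representation.ofModule (k := k) (G := G) X).tprod
    (Representation.ofModule N)) r g (e.symm (x ⊗ₜ n))
  refine h.trans ?_
  have h2 : r • (((MonoidAlgebra.single g 1 : MonoidAlgebra k G) • x) ⊗ₜ[k]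
      ((MonoidAlgebra.single g 1 : MonoidAlgebra k G) • n)) =
      ((MonoidAlgebra.single g r : MonoidAlgebra k G) • x) ⊗ₜ[k]
      ((MonoidAlgebra.single g 1 : MonoidAlgebra k G) • n) := by
    rw [TensorProduct.smul_tmul', ← smul_assoc, ← single_eq]
  exact h2

theorem core' [Finite G] {X N B : Type} [AddCommGroup X] [Module (MonoidAlgebra k G) X]
    [AddCommGroup N] [Module (MonoidAlgebra k G) N] [AddCommGroup B] [Module (MonoidAlgebra k G) B]
    [Module.Finite (MonoidAlgebra k G) X]
    (j : N →ₗ[MonoidAlgebra k G] B) (hj : Function.Injective j)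
    (ε : B →+ k) (hε : ∀ (g : G) (r : k) (b : B),
      ε ((MonoidAlgebra.single g r : MonoidAlgebra k G) • b) = r * ε b)
    (hjε : Function.Exact j ε) (hs : Function.Surjective ε)
    (u : MonoidAlgebra k G ≃ₗ[MonoidAlgebra k G] B) :
    ∃ (f : dtensor k G X N →ₗ[MonoidAlgebra k G] dtensor k G X B)
      (g : dtensor k G X B →ₗ[MonoidAlgebra k G] X),
      Function.Injective f ∧ Function.Exact f g ∧ Function.Surjective g ∧
      Module.Projective (MonoidAlgebra k G) (dtensor k G X B) := by
  letI : Module k X := Module.compHom X (algebraMap k (MonoidAlgebra k G))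
  letI : Module k N := Module.compHom N (algebraMap k (MonoidAlgebra k G))
  letI : Module k B := Module.compHom B (algebraMap k (MonoidAlgebra k G))
  have := tower (k := k) (G := G) (V := X)
  have := tower (k := k) (G := G) (V := N)
  have := tower (k := k) (G := G) (V := B)
  obtain ⟨e, he⟩ := dt_equiv (k := k) (G := G) (X := X) (N := N)
  obtain ⟨e', he'⟩ := dt_equiv (k := k) (G := G) (X := X) (N := B)
  let ε' : B →ₗ[k] k :=
    { toFun := ε, map_add' := map_add ε
      map_smul' := fun r b => by rw [← single_one_smul (G := G), hε]; rfl }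
  exact core e he e' he' j hj ε' (fun g b => (hε g 1 b).trans (one_mul _)) hjε hs u

end Tens

/-- the augmentation -/
noncomputable def aug (k G : Type) [Field k] [Group G] : MonoidAlgebra k G →ₐ[k] k :=
  MonoidAlgebra.lift k k G 1

theorem aug_single {k G : Type} [Field k] [Group G] (g : G) (r : k) :
    aug k G (MonoidAlgebra.single g r) = r := by
  simp [aug]

/-- augmentation ideal -/
noncomputable def augI (k G : Type) [Field k] [Group G] : Ideal (MonoidAlgebra k G) :=
  RingHom.ker (aug k G)

open CategoryTheory in
theorem ext_all (k G : Type) [Field k] [Group G] [Finite G]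
    (M : Type) [AddCommGroup M] [Module (MonoidAlgebra k G) M]
    (hM : IsEndofinite (MonoidAlgebra k G) M)
    (hT : TensorClosed k G (chiMod (MonoidAlgebra k G) M)) (n : ℕ) :
    ∀ (X : Type) [AddCommGroup X] [Module (MonoidAlgebra k G) X],
    MemAdloc (MonoidAlgebra k G) (chiMod (MonoidAlgebra k G) M) X →
    Subsingleton (Abelian.Ext.{0} (ModuleCat.of (MonoidAlgebra k G) X)
      (ModuleCat.of (MonoidAlgebra k G) M) (n+1)) := by
  have : IsNoetherianRing (MonoidAlgebra k G) := IsNoetherianRing.of_finite k _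
  induction n with
  | zero => intro X _ _ h; exact (adloc_iff hM h.1).1 h
  | succ n ih =>
    intro X _ _ h
    have hX := h.1
    obtain ⟨f, g, hf, hfg, hg, hP⟩ := core' (X := X) (augI k G).subtype
      (Submodule.injective_subtype _) (aug k G).toLinearMap.toAddMonoidHom
      (fun g r b => (map_mul (aug k G) _ _).trans (by rw [aug_single]; rfl))
      (fun a => ⟨fun ha => ⟨⟨a, ha⟩, rfl⟩, by rintro ⟨b, rfl⟩; exact b.2⟩)
      (fun r => ⟨MonoidAlgebra.single 1 r, aug_single _ _⟩) (LinearEquiv.refl _ _)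
    exact ext_shift hP f g hf hfg hg (n+1) (ih _ (hT X (augI k G) h inferInstance))

open CategoryTheory in
/-- For a finite group `G`, a field `k` and an endofinite `kG`-module `M`
whose subadditive function `χ_M` is tensor closed, a finite dimensional `kG`-module `X`
lies in `Adloc(χ_M)` if and only if `Ext^n_{kG}(X, M) = 0` for all `n ≥ 1`. -/
theorem statement6 (k G : Type) [Field k] [Group G] [Finite G]
    (M : Type) [AddCommGroup M] [Module (MonoidAlgebra k G) M]
    (hM : IsEndofinite (MonoidAlgebra k G) M)
    (hT : TensorClosed k G (chiMod (MonoidAlgebra k G) M))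
    (X : Type) [AddCommGroup X] [Module (MonoidAlgebra k G) X]
    (hX : Module.Finite (MonoidAlgebra k G) X) :
    MemAdloc (MonoidAlgebra k G) (chiMod (MonoidAlgebra k G) M) X ↔
      ∀ n : ℕ, 1 ≤ n →
        Subsingleton (((Ext ℤ (ModuleCat (MonoidAlgebra k G)) n).obj
          (Opposite.op (ModuleCat.of (MonoidAlgebra k G) X))).obj
            (ModuleCat.of (MonoidAlgebra k G) M)) := by
  have : IsNoetherianRing (MonoidAlgebra k G) := IsNoetherianRing.of_finite k _
  constructor
  · intro h n hn
    rw [ext_iff _ _ _ n hn]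
    obtain ⟨m, rfl⟩ : ∃ m, n = m + 1 := ⟨n - 1, by omega⟩
    exact ext_all k G M hM hT m X h
  · intro h
    have := h 1 le_rfl
    rw [ext_iff _ _ _ 1 le_rfl] at this
    exact (adloc_iff hM hX).2 this
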